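/- Let V be a subspace of ℝ^S for a finite set S, and let T ⊆ S. Then the orthogonal complement in ℝ^T of the contraction V×T equals the restriction of the orthogonal complement: (V×T)^⊥ = V^⊥ ∘ T. -/

import Mathlib

/-- The orthogonal complement of a subspace `V` of `ℝ^S` with respect to the
dot product `⟨x,y⟩ = ∑ e, x e * y e`. -/
def perpSub {S : Type*} [Fintype S] (V : Submodule ℝ (S → ℝ)) : Submodule ℝ (S → ℝ) where
  carrier := {y | ∀ x ∈ V, ∑ e, x e * y e = 0}
  zero_mem' := by intro x _; simp
  add_mem' := by
    intro a b ha hb x hx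
    simp only [Set.mem_setOf_eq] at ha hb
    simp [Pi.add_apply, mul_add, Finset.sum_add_distrib, ha x hx, hb x hx]
  smul_mem' := by
    intro c a ha x hx
    simp only [Set.mem_setOf_eq] at ha
    simp [Pi.smul_apply, smul_eq_mul, mul_left_comm, ← Finset.mul_sum, ha x hx]

/-- The restriction `V∘T` of a subspace `V ⊆ ℝ^S` to `T ⊆ S`:
all vectors `x|_T` for `x ∈ V`. -/
def restrictTo {S : Type*} (V : Submodule ℝ (S → ℝ)) (T : Set S) : Submodule ℝ (T → ℝ) :=
  V.map (LinearMap.funLeft ℝ ℝ (Subtype.val : T → S))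

/-- The subspace of vectors on `S` vanishing outside `T`. -/
def zeroOutside {S : Type*} (T : Set S) : Submodule ℝ (S → ℝ) where
  carrier := {x | ∀ e ∉ T, x e = 0}
  zero_mem' := by intro e _; rfl
  add_mem' := by
    intro a b ha hb e he
    simp [ha e he, hb e he]
  smul_mem' := by
    intro c a ha e he
    simp [ha e he]

/-- The contraction `V×T` of a subspace `V ⊆ ℝ^S` to `T ⊆ S`:
all vectors `x|_T` for `x ∈ V` with `x e = 0` for every `e ∉ T`. -/
def contractTo {S : Type*} (V : Submodule ℝ (S → ℝ)) (T : Set S) : Submodule ℝ (T → ℝ) :=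
  (V ⊓ zeroOutside T).map (LinearMap.funLeft ℝ ℝ (Subtype.val : T → S))

/-!
Restriction to `T` is the transpose, for the dot products, of extension by zero from `T`, and
`V×T` is the preimage of `V` under extension by zero. So the claim is an instance of the duality
`(g⁻¹ V)^⊥ = gᵀ (V^⊥)`, valid for every linear map `g` over a field: `g⁻¹ V` is the kernel of
`M → N → N ⧸ V`, and the functionals vanishing on the kernel of a linear map are those that
factor through it.
-/

section Duality

variable {K M N : Type*} [Field K] [AddCommGroup M] [Module K M] [AddCommGroup N] [Module K N]

theorem dualAnnihilator_comap_eq_map_dualMap (g : M →ₗ[K] N) (V : Submodule K N) :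
    (V.comap g).dualAnnihilator = V.dualAnnihilator.map g.dualMap := by
  calc (V.comap g).dualAnnihilator
      = (LinearMap.ker (V.mkQ ∘ₗ g)).dualAnnihilator := by
        rw [LinearMap.ker_comp, Submodule.ker_mkQ]
    _ = LinearMap.range (g.dualMap ∘ₗ V.mkQ.dualMap) := by
        rw [← LinearMap.range_dualMap_eq_dualAnnihilator_ker, LinearMap.dualMap_comp_dualMap]
    _ = V.dualAnnihilator.map g.dualMap := by
        rw [LinearMap.range_comp, Submodule.range_dualMap_mkQ_eq]

variable {M' N' : Type*} [AddCommGroup M'] [Module K M'] [AddCommGroup N'] [Module K N']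

theorem orthogonalBilin_comap_eq_map {B : M →ₗ[K] M' →ₗ[K] K} {C : N →ₗ[K] N' →ₗ[K] K}
    {g : M →ₗ[K] N} {f : N' →ₗ[K] M'} (hB : B.SeparatingRight)
    (hC : Function.Surjective C.flip) (hgf : ∀ x y, C (g x) y = B x (f y)) (V : Submodule K N) :
    (V.comap g).orthogonalBilin B = (V.orthogonalBilin C).map f := by
  apply le_antisymm
  · intro m hm
    have hm_mem : B.flip m ∈ V.dualAnnihilator.map g.dualMap := by
      rw [← dualAnnihilator_comap_eq_map_dualMap, Submodule.mem_dualAnnihilator]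
      exact hm
    obtain ⟨φ, hφ, hφm⟩ := hm_mem
    obtain ⟨n, rfl⟩ := hC φ
    refine ⟨n, (Submodule.mem_dualAnnihilator _).mp hφ, ?_⟩
    have hfn : ∀ x, B x (f n) = B x m := fun x ↦
      (hgf x n).symm.trans (LinearMap.congr_fun hφm x)
    exact sub_eq_zero.mp <| hB _ fun x ↦ by rw [map_sub, hfn, sub_self]
  · rintro _ ⟨n, hn, rfl⟩ x hx
    exact (hgf x n).symm.trans (hn (g x) hx)

end Duality

section DotProduct

variable {R S : Type*} [CommSemiring R] [Fintype S]

theorem dotProductBilin_separatingRight :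
    (dotProductBilin R R : (S → R) →ₗ[R] (S → R) →ₗ[R] R).SeparatingRight := fun y hy ↦
  dotProduct_eq_zero y fun x ↦ (dotProduct_comm y x).trans (hy x)

theorem dotProductBilin_flip_surjective :
    Function.Surjective (dotProductBilin R R : (S → R) →ₗ[R] (S → R) →ₗ[R] R).flip := by
  classical
  intro φ
  obtain ⟨y, rfl⟩ := (dotProductEquiv R S).surjective φ
  exact ⟨y, LinearMap.ext fun x ↦ dotProduct_comm x y⟩

end DotProduct

theorem extend_zero_dotProduct {R S T : Type*} [NonUnitalNonAssocSemiring R] [Fintype S]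
    [Fintype T] {i : T → S} (hi : Function.Injective i) (x : T → R) (y : S → R) :
    Function.extend i x 0 ⬝ᵥ y = x ⬝ᵥ (y ∘ i) := by
  refine (Fintype.sum_of_injective i hi _ _ (fun e he ↦ ?_) fun t ↦ ?_).symm
  · rw [Function.extend_apply' _ _ _ he, Pi.zero_apply, zero_mul]
  · rw [hi.extend_apply, Function.comp_apply]

theorem map_funLeft_inf_pi_bot_eq_comap_extendByZero {R S T : Type*} [Semiring R] {i : T → S}
    (hi : Function.Injective i) (V : Submodule R (S → R)) :
    (V ⊓ Submodule.pi (Set.range i)ᶜ fun _ ↦ ⊥).map (LinearMap.funLeft R R i) =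
      V.comap (Function.ExtendByZero.linearMap R i) := by
  apply le_antisymm
  · rintro _ ⟨x, ⟨hxV, hx⟩, rfl⟩
    have extend_restrict :
        Function.ExtendByZero.linearMap R i (LinearMap.funLeft R R i x) = x := by
      funext e
      by_cases he : e ∈ Set.range i
      · obtain ⟨t, rfl⟩ := he
        exact hi.extend_apply _ _ t
      · exact (Function.extend_apply' _ _ _ he).trans (hx e he).symm
    rwa [Submodule.mem_comap, extend_restrict]
  · intro y hy
    exact ⟨Function.extend i y 0, ⟨hy, fun e he ↦ Function.extend_apply' _ _ _ he⟩,
      Function.extend_comp hi y 0⟩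

theorem perp_contract_eq_restrict_perp_general {K S T : Type*} [Field K] [Fintype S] [Fintype T]
    {i : T → S} (hi : Function.Injective i) (V : Submodule K (S → K)) :
    ((V ⊓ Submodule.pi (Set.range i)ᶜ fun _ ↦ ⊥).map
        (LinearMap.funLeft K K i)).orthogonalBilin (dotProductBilin K K) =
      (V.orthogonalBilin (dotProductBilin K K)).map (LinearMap.funLeft K K i) := by
  rw [map_funLeft_inf_pi_bot_eq_comap_extendByZero hi]
  exact orthogonalBilin_comap_eq_map dotProductBilin_separatingRight
    dotProductBilin_flip_surjective (extend_zero_dotProduct hi) V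

theorem perpSub_eq_orthogonalBilin {S : Type*} [Fintype S] (V : Submodule ℝ (S → ℝ)) :
    perpSub V = V.orthogonalBilin (dotProductBilin ℝ ℝ) :=
  rfl

theorem zeroOutside_eq_pi_bot {S : Type*} (T : Set S) :
    zeroOutside T = Submodule.pi Tᶜ fun _ ↦ ⊥ :=
  rfl

/-- `(V×T)^⊥ = V^⊥ ∘ T`: the orthogonal complement of the contraction equals
the restriction of the orthogonal complement. -/
theorem perp_contract_eq_restrict_perp
    {S : Type*} [Fintype S] (V : Submodule ℝ (S → ℝ)) (T : Set S)
    [DecidablePred (· ∈ T)] :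
    perpSub (contractTo V T) = restrictTo (perpSub V) T := by
  simpa only [perpSub_eq_orthogonalBilin, contractTo, restrictTo, zeroOutside_eq_pi_bot,
    Subtype.range_coe] using
    perp_contract_eq_restrict_perp_general (Subtype.val_injective (p := (· ∈ T))) V
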